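/- Let A₁ and A₂ be complex Banach algebras and let φ : A₁ → A₂ be a continuous algebra homomorphism with dense range. If A₁ is cyclically weakly amenable, then A₂ is cyclically weakly amenable. -/

import Mathlib

/-- `D : A → A*` (a continuous linear map into the dual) is a *derivation* when
`D(ab) = D(a)·b + a·D(b)`, where `A*` is an `A`-bimodule via `(F·a)(x) = F(ax)` and
`(a·F)(x) = F(xa)`; pairing against `x : A` gives the condition below. -/
def IsDerivation {A : Type*} [NonUnitalNormedRing A] [NormedSpace ℂ A]
    (D : A →L[ℂ] (A →L[ℂ] ℂ)) : Prop :=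
  ∀ a b x : A, D (a * b) x = D a (b * x) + D b (x * a)

/-- A map `D : A → A*` is *cyclic* when `⟨D(a), b⟩ + ⟨D(b), a⟩ = 0` for all `a, b`. -/
def IsCyclicMap {A : Type*} [NonUnitalNormedRing A] [NormedSpace ℂ A]
    (D : A →L[ℂ] (A →L[ℂ] ℂ)) : Prop :=
  ∀ a b : A, D a b + D b a = 0

/-- `D : A → A*` is *inner* if `D = ad_F` for some `F ∈ A*`, where
`ad_F(a) = F·a - a·F`, i.e. `⟨ad_F(a), x⟩ = F(ax) - F(xa)`. -/
def IsInnerDerivation {A : Type*} [NonUnitalNormedRing A] [NormedSpace ℂ A]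
    (D : A →L[ℂ] (A →L[ℂ] ℂ)) : Prop :=
  ∃ F : A →L[ℂ] ℂ, ∀ a x : A, D a x = F (a * x) - F (x * a)

/-- A Banach algebra `A` is *cyclically weakly amenable* if every continuous derivation
from `A` into `A*` is cyclic. -/
def CyclicallyWeaklyAmenable (A : Type*) [NonUnitalNormedRing A] [NormedSpace ℂ A] : Prop :=
  ∀ D : A →L[ℂ] (A →L[ℂ] ℂ), IsDerivation D → IsCyclicMap D

/-- A Banach algebra `A` is *weakly amenable* if every continuous derivation
from `A` into `A*` is inner. -/
def WeaklyAmenable (A : Type*) [NonUnitalNormedRing A] [NormedSpace ℂ A] : Prop :=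
  ∀ D : A →L[ℂ] (A →L[ℂ] ℂ), IsDerivation D → IsInnerDerivation D

/-- A Banach algebra `A` is *cyclically amenable* if every continuous cyclic derivation
from `A` into `A*` is inner. -/
def CyclicallyAmenable (A : Type*) [NonUnitalNormedRing A] [NormedSpace ℂ A] : Prop :=
  ∀ D : A →L[ℂ] (A →L[ℂ] ℂ), IsDerivation D → IsCyclicMap D → IsInnerDerivation D

section DenseRange

variable {A B : Type*} [NonUnitalNormedRing A] [NormedSpace ℂ A]
  [NonUnitalNormedRing B] [NormedSpace ℂ B] {D : B →L[ℂ] (B →L[ℂ] ℂ)} {φ : A →L[ℂ] B}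

/-- `D.bilinearComp φ φ` is the pullback `φ* ∘ D ∘ φ : A → A*`, with `φ*` the Banach adjoint. -/
theorem IsDerivation.bilinearComp (hD : IsDerivation D) (hφ : ∀ a b : A, φ (a * b) = φ a * φ b) :
    IsDerivation (D.bilinearComp φ φ) := fun a b x ↦ by
  simpa only [ContinuousLinearMap.bilinearComp_apply, hφ] using hD (φ a) (φ b) (φ x)

theorem IsCyclicMap.of_bilinearComp (hφ : DenseRange φ)
    (hD : IsCyclicMap (D.bilinearComp φ φ)) : IsCyclicMap D := fun a b ↦ by
  have isClosed_cyclic : IsClosed {p : B × B | D p.1 p.2 + D p.2 p.1 = 0} :=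
    isClosed_eq (by fun_prop) continuous_const
  exact hφ.induction_on₂ (p := fun a b ↦ D a b + D b a = 0) isClosed_cyclic hD a b

theorem cyclicallyWeaklyAmenable_of_denseRange_hom_general
    (hφmul : ∀ a b : A, φ (a * b) = φ a * φ b) (hφdense : DenseRange φ)
    (h : CyclicallyWeaklyAmenable A) : CyclicallyWeaklyAmenable B :=
  fun D hD ↦ .of_bilinearComp hφdense (h (D.bilinearComp φ φ) (hD.bilinearComp hφmul))

end DenseRange

/-- If `φ : A₁ → A₂` is a continuous algebra homomorphism with dense range between complex
Banach algebras and `A₁` is cyclically weakly amenable, then so is `A₂`. -/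
theorem cyclicallyWeaklyAmenable_of_denseRange_hom {A₁ A₂ : Type*}
    [NonUnitalNormedRing A₁] [NormedSpace ℂ A₁] [IsScalarTower ℂ A₁ A₁]
    [SMulCommClass ℂ A₁ A₁] [CompleteSpace A₁]
    [NonUnitalNormedRing A₂] [NormedSpace ℂ A₂] [IsScalarTower ℂ A₂ A₂]
    [SMulCommClass ℂ A₂ A₂] [CompleteSpace A₂]
    (φ : A₁ →L[ℂ] A₂) (hφmul : ∀ a b : A₁, φ (a * b) = φ a * φ b)
    (hφdense : DenseRange φ)
    (h : CyclicallyWeaklyAmenable A₁) :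
    CyclicallyWeaklyAmenable A₂ := by
  exact cyclicallyWeaklyAmenable_of_denseRange_hom_general hφmul hφdense h
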